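/- Let ω ∈ D̂, 0 < p < ∞ and α ∈ ℝ. Then there exist constants c, C > 0 such that for all s ∈ (0,1): c (∫_0^s dt/(ω̂(t)^p (1-t)^α) + 1) ≤ Σ_{n=0}^∞ (n+1)^{α-2} s^n / (ω_{2n+1})^p ≤ C (∫_0^s dt/(ω̂(t)^p (1-t)^α) + 1). -/

import Mathlib

open MeasureTheory

/-- The tail integral of a radial weight. -/
noncomputable def hat (ω : ℝ → ℝ) (r : ℝ) : ℝ := ∫ s in r..1, ω s

/-- The x-th moment of a radial weight. -/
noncomputable def moment (ω : ℝ → ℝ) (x : ℝ) : ℝ := ∫ r in (0:ℝ)..1, r ^ x * ω r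

/-!
Write `x ≍ y` for two-sided bounds with uniform constants. Integration by parts turns the moment
into `∫ x r ^ (x - 1) ω̂(r) dr`, whose kernel decays exponentially in `x (1 - r)`, whereas doubling
bounds `ω̂(r) / ω̂(1 - 1 / x)` by a power of `1 + x (1 - r)`; this gives `ω_x ≍ ω̂(1 - 1 / x)`.

The integrand `h(t) = 1 / (ω̂(t) ^ p (1 - t) ^ α)` is comparable at points whose distances to `1`
differ by a factor of at most `2`, because `ω̂` and `1 - t` are and this property passes to products
and real powers. Hence the `n`-th coefficient `(n + 1) ^ (α - 2) / ω_{2n+1} ^ p` is comparable to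
`h(1 - 1 / (n + 1)) / (n + 1) ^ 2`, that is, to the integral of `h` over
`[1 - 1 / (n + 1), 1 - 1 / (n + 2)]`, and the coefficients of index less than `N` add up to
`∫_0^{1 - 1 / (N + 1)} h`, up to the first one, which accounts for the `+ 1`. Finally, these
coefficients grow at most polynomially, so `∑ b_n s ^ n` is comparable to `∑ b_n` over
`n < 1 / (1 - s)`.
-/

open Asymptotics Filter Set

theorem isBigO_principal_iff_of_nonneg {ι : Type*} {S : Set ι} {f g : ι → ℝ}
    (hf : ∀ s ∈ S, 0 ≤ f s) (hg : ∀ s ∈ S, 0 ≤ g s) :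
    f =O[𝓟 S] g ↔ ∃ C, ∀ s ∈ S, f s ≤ C * g s := by
  rw [isBigO_principal]
  refine exists_congr fun C => forall₂_congr fun s hs => ?_
  rw [Real.norm_of_nonneg (hf s hs), Real.norm_of_nonneg (hg s hs)]

theorem exists_pos_mul_le_and_le_mul_of_isTheta {ι : Type*} {S : Set ι} {f g : ι → ℝ}
    (hf : ∀ s ∈ S, 0 ≤ f s) (hg : ∀ s ∈ S, 0 ≤ g s) (h : f =Θ[𝓟 S] g) :
    ∃ c > 0, ∃ C > 0, ∀ s ∈ S, c * g s ≤ f s ∧ f s ≤ C * g s := by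
  obtain ⟨C, hC⟩ := (isBigO_principal_iff_of_nonneg hf hg).1 h.isBigO
  obtain ⟨D, hD⟩ := (isBigO_principal_iff_of_nonneg hg hf).1 h.isBigO_symm
  refine ⟨(max D 1)⁻¹, by positivity, max C 1, by positivity, fun s hs => ⟨?_, ?_⟩⟩
  · rw [inv_mul_le_iff₀ (by positivity)]
    exact (hD s hs).trans (mul_le_mul_of_nonneg_right (le_max_left D 1) (hf s hs))
  · exact (hC s hs).trans (mul_le_mul_of_nonneg_right (le_max_left C 1) (hg s hs))

/-- A positive function on `[0, 1)` with a Harnack inequality: its values at two points are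
comparable, with a uniform constant, whenever the distances of the points to `1` differ by a factor
of at most `2`. Since `r` and `t` play symmetric roles, a one-sided inequality suffices. -/
structure IsHarnack (h : ℝ → ℝ) : Prop where
  pos : ∀ t ∈ Ico (0 : ℝ) 1, 0 < h t
  exists_le_mul : ∃ K, ∀ r ∈ Ico (0 : ℝ) 1, ∀ t ∈ Ico (0 : ℝ) 1,
    1 - r ≤ 2 * (1 - t) → 1 - t ≤ 2 * (1 - r) → h t ≤ K * h r

namespace IsHarnack

variable {g h : ℝ → ℝ}

theorem exists_one_le_le_mul (hh : IsHarnack h) :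
    ∃ K ≥ 1, ∀ r ∈ Ico (0 : ℝ) 1, ∀ t ∈ Ico (0 : ℝ) 1,
      1 - r ≤ 2 * (1 - t) → 1 - t ≤ 2 * (1 - r) → h t ≤ K * h r := by
  obtain ⟨K, hK⟩ := hh.exists_le_mul
  refine ⟨max K 1, le_max_right K 1, fun r hr t ht hrt htr => (hK r hr t ht hrt htr).trans ?_⟩
  exact mul_le_mul_of_nonneg_right (le_max_left K 1) (hh.pos r hr).le

theorem one_sub : IsHarnack fun t => 1 - t where
  pos _ ht := sub_pos.2 ht.2
  exists_le_mul := ⟨2, fun _ _ _ _ _ htr => htr⟩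

theorem mul (hg : IsHarnack g) (hh : IsHarnack h) : IsHarnack fun t => g t * h t where
  pos t ht := mul_pos (hg.pos t ht) (hh.pos t ht)
  exists_le_mul := by
    obtain ⟨K, hK1, hK⟩ := hg.exists_one_le_le_mul
    obtain ⟨L, hL⟩ := hh.exists_le_mul
    refine ⟨K * L, fun r hr t ht hrt htr => ?_⟩
    rw [mul_mul_mul_comm]
    exact mul_le_mul (hK r hr t ht hrt htr) (hL r hr t ht hrt htr) (hh.pos t ht).le
      (mul_nonneg (zero_le_one.trans hK1) (hg.pos r hr).le)

theorem rpow (hh : IsHarnack h) (p : ℝ) : IsHarnack fun t => h t ^ p where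
  pos t ht := Real.rpow_pos_of_pos (hh.pos t ht) p
  exists_le_mul := by
    obtain ⟨K, hK1, hK⟩ := hh.exists_one_le_le_mul
    have hK0 : 0 < K := zero_lt_one.trans_le hK1
    refine ⟨K ^ |p|, fun r hr t ht hrt htr => ?_⟩
    have hr0 := hh.pos r hr
    have ht0 := hh.pos t ht
    rcases le_total 0 p with hp | hp
    · rw [abs_of_nonneg hp, ← Real.mul_rpow hK0.le hr0.le]
      exact Real.rpow_le_rpow ht0.le (hK r hr t ht hrt htr) hp
    · rw [abs_of_nonpos hp, Real.rpow_neg hK0.le, le_inv_mul_iff₀ (by positivity),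
        ← Real.mul_rpow hK0.le ht0.le]
      exact Real.rpow_le_rpow_of_nonpos hr0 (hK t ht r hr htr hrt) hp

theorem exists_le_pow_mul (hh : IsHarnack h) :
    ∃ K ≥ 1, ∀ (k : ℕ) (r t : ℝ), 0 ≤ r → r ≤ t → t < 1 → 1 - r ≤ 2 ^ k * (1 - t) →
      h t ≤ K ^ k * h r ∧ h r ≤ K ^ k * h t := by
  obtain ⟨K, hK1, hK⟩ := hh.exists_one_le_le_mul
  have hK0 : 0 ≤ K := zero_le_one.trans hK1
  refine ⟨K, hK1, fun k => ?_⟩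
  induction k with
  | zero =>
    intro r t _ hrt _ hdist
    obtain rfl : r = t := by linarith
    simp
  | succ k ih =>
    intro r t hr hrt ht hdist
    set u := min ((1 + r) / 2) t with hu
    have hru : r ≤ u := le_min (by linarith) hrt
    have hut : u ≤ t := min_le_right _ _
    have hu_half : u ≤ (1 + r) / 2 := min_le_left _ _
    have hr_mem : r ∈ Ico (0 : ℝ) 1 := ⟨hr, hrt.trans_lt ht⟩
    have hu_mem : u ∈ Ico (0 : ℝ) 1 := ⟨hr.trans hru, hut.trans_lt ht⟩
    have hu_dist : 1 - u ≤ 2 ^ k * (1 - t) := by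
      rw [pow_succ] at hdist
      have : 1 - t ≤ 2 ^ k * (1 - t) :=
        le_mul_of_one_le_left (sub_pos.2 ht).le (one_le_pow₀ one_le_two)
      rcases min_choice ((1 + r) / 2) t with h | h <;> rw [hu, h] <;> linarith
    obtain ⟨ih₁, ih₂⟩ := ih u t hu_mem.1 hut ht hu_dist
    constructor
    · calc h t ≤ K ^ k * h u := ih₁
        _ ≤ K ^ k * (K * h r) := by
          gcongr; exact hK r hr_mem u hu_mem (by linarith) (by linarith [hu_mem.2])
        _ = K ^ (k + 1) * h r := by ring
    · calc h r ≤ K * h u := hK u hu_mem r hr_mem (by linarith [hu_mem.2]) (by linarith)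
        _ ≤ K * (K ^ k * h t) := mul_le_mul_of_nonneg_left ih₂ hK0
        _ = K ^ (k + 1) * h t := by ring

theorem exists_le_div_pow_mul (hh : IsHarnack h) :
    ∃ A ≥ 1, ∃ γ : ℕ, ∀ r t : ℝ, 0 ≤ r → r ≤ t → t < 1 →
      h t ≤ A * ((1 - r) / (1 - t)) ^ γ * h r ∧ h r ≤ A * ((1 - r) / (1 - t)) ^ γ * h t := by
  obtain ⟨K, hK1, hK⟩ := hh.exists_le_pow_mul
  obtain ⟨γ, hγ⟩ := pow_unbounded_of_one_lt K one_lt_two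
  refine ⟨2 ^ γ, one_le_pow₀ one_le_two, γ, fun r t hr hrt ht => ?_⟩
  have ht_sub : 0 < 1 - t := sub_pos.2 ht
  have hratio : 1 ≤ (1 - r) / (1 - t) := by rw [one_le_div ht_sub]; linarith
  obtain ⟨k, hk_le, hk_lt⟩ := exists_nat_pow_near hratio one_lt_two
  have hdist : 1 - r ≤ 2 ^ (k + 1) * (1 - t) := ((div_lt_iff₀ ht_sub).1 hk_lt).le
  have hpow : K ^ (k + 1) ≤ 2 ^ γ * ((1 - r) / (1 - t)) ^ γ :=
    calc K ^ (k + 1) ≤ (2 ^ γ) ^ (k + 1) := by gcongr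
      _ = 2 ^ γ * (2 ^ k) ^ γ := by ring
      _ ≤ 2 ^ γ * ((1 - r) / (1 - t)) ^ γ := by gcongr
  have hr0 := hh.pos r ⟨hr, hrt.trans_lt ht⟩
  have ht0 := hh.pos t ⟨hr.trans hrt, ht⟩
  obtain ⟨h₁, h₂⟩ := hK (k + 1) r t hr hrt ht hdist
  exact ⟨h₁.trans (by gcongr), h₂.trans (by gcongr)⟩

theorem comp_isTheta_comp {ι : Type*} (hh : IsHarnack h) {u v : ι → ℝ}
    (hu : ∀ i, u i ∈ Ico (0 : ℝ) 1) (hv : ∀ i, v i ∈ Ico (0 : ℝ) 1)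
    (huv : ∀ i, 1 - u i ≤ 2 * (1 - v i)) (hvu : ∀ i, 1 - v i ≤ 2 * (1 - u i)) :
    (fun i => h (u i)) =Θ[⊤] fun i => h (v i) := by
  obtain ⟨K, hK⟩ := hh.exists_le_mul
  rw [← principal_univ]
  exact ⟨(isBigO_principal_iff_of_nonneg (fun i _ => (hh.pos _ (hu i)).le)
      fun i _ => (hh.pos _ (hv i)).le).2 ⟨K, fun i _ => hK _ (hv i) _ (hu i) (hvu i) (huv i)⟩,
    (isBigO_principal_iff_of_nonneg (fun i _ => (hh.pos _ (hv i)).le)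
      fun i _ => (hh.pos _ (hu i)).le).2 ⟨K, fun i _ => hK _ (hu i) _ (hv i) (huv i) (hvu i)⟩⟩

end IsHarnack

theorem succ_pow_le_factorial_mul_choose (n γ : ℕ) :
    ((n : ℝ) + 1) ^ γ ≤ γ.factorial * ((n + γ).choose γ : ℝ) := by
  have h := Nat.pow_succ_le_ascFactorial (n + 1) γ
  rw [Nat.ascFactorial_eq_factorial_mul_choose] at h
  exact_mod_cast h

theorem summable_succ_pow_mul_geometric (γ : ℕ) {s : ℝ} (hs0 : 0 ≤ s) (hs1 : s < 1) :
    Summable fun n : ℕ => ((n : ℝ) + 1) ^ γ * s ^ n := by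
  have hs : ‖s‖ < 1 := by rwa [Real.norm_of_nonneg hs0]
  refine ((summable_choose_mul_geometric_of_norm_lt_one γ hs).mul_left
    (γ.factorial : ℝ)).of_nonneg_of_le (fun n => by positivity) fun n => ?_
  rw [← mul_assoc]
  gcongr
  exact succ_pow_le_factorial_mul_choose n γ

theorem tsum_succ_pow_mul_geometric_le (γ : ℕ) {s : ℝ} (hs0 : 0 ≤ s) (hs1 : s < 1) :
    ∑' n : ℕ, ((n : ℝ) + 1) ^ γ * s ^ n ≤ γ.factorial * ((1 - s)⁻¹) ^ (γ + 1) := by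
  have hs : ‖s‖ < 1 := by rwa [Real.norm_of_nonneg hs0]
  have hchoose := (hasSum_choose_mul_geometric_of_norm_lt_one γ hs).mul_left (γ.factorial : ℝ)
  rw [inv_pow, ← one_div, ← hchoose.tsum_eq]
  refine (summable_succ_pow_mul_geometric γ hs0 hs1).tsum_le_tsum (fun n => ?_) hchoose.summable
  rw [← mul_assoc]
  gcongr
  exact succ_pow_le_factorial_mul_choose n γ

theorem one_le_exp_one_mul_pow {s : ℝ} {n : ℕ} (hs : s ∈ Ico (0 : ℝ) 1)
    (hn : (n : ℝ) + 1 ≤ (1 - s)⁻¹) : 1 ≤ Real.exp 1 * s ^ n := by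
  have hn_mul : ((n : ℝ) + 1) * (1 - s) ≤ 1 := by
    rwa [← one_div, le_div_iff₀ (sub_pos.2 hs.2)] at hn
  rcases hs.1.eq_or_lt with rfl | hs0
  · have hn0 : (n : ℝ) = 0 := le_antisymm (by linarith) n.cast_nonneg
    simp [Nat.cast_eq_zero.1 hn0]
  have hinv : s⁻¹ ^ n ≤ Real.exp 1 :=
    calc s⁻¹ ^ n ≤ Real.exp (s⁻¹ - 1) ^ n := by
          gcongr
          linarith [Real.add_one_le_exp (s⁻¹ - 1)]
      _ = Real.exp (n * (1 - s) / s) := by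
          rw [← Real.exp_nat_mul]; congr 1; field_simp
      _ ≤ Real.exp 1 := Real.exp_le_exp.2 ((div_le_one hs0).2 (by linarith))
  rwa [inv_pow, inv_le_iff_one_le_mul₀ (by positivity)] at hinv

theorem exists_floor_inv_one_sub_eq_succ {s : ℝ} (hs : s ∈ Ico (0 : ℝ) 1) :
    ∃ N : ℕ, ⌊(1 - s)⁻¹⌋₊ = N + 1 ∧ (N : ℝ) + 1 ≤ (1 - s)⁻¹ ∧ (1 - s)⁻¹ ≤ N + 2 := by
  have hone : 1 ≤ (1 - s)⁻¹ := (one_le_inv₀ (sub_pos.2 hs.2)).2 (by linarith [hs.1])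
  obtain ⟨N, hN⟩ := Nat.exists_eq_add_of_le' ((Nat.one_le_floor_iff _).2 hone)
  have hle := Nat.floor_le (zero_le_one.trans hone)
  have hlt := Nat.lt_floor_add_one (1 - s)⁻¹
  rw [hN] at hle hlt
  push_cast at hle hlt
  exact ⟨N, hN, hle, by linarith⟩

/-- A positive sequence `b` for which `n ↦ b n / (n + 1) ^ γ` is almost decreasing for some `γ`:
it may decay arbitrarily fast, but from any index on it grows at most polynomially relative to its
value there. -/
structure HasPolynomialGrowth (b : ℕ → ℝ) : Prop where
  pos : ∀ n, 0 < b n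
  exists_le : ∃ K > 0, ∃ γ : ℕ, ∀ N n : ℕ, N ≤ n → b n ≤ K * (((n : ℝ) + 1) / (N + 1)) ^ γ * b N

namespace HasPolynomialGrowth

variable {b : ℕ → ℝ}

theorem summable_mul_pow (hb : HasPolynomialGrowth b) {s : ℝ} (hs : s ∈ Ico (0 : ℝ) 1) :
    Summable fun n => b n * s ^ n := by
  obtain ⟨K, -, γ, hK⟩ := hb.exists_le
  refine ((summable_succ_pow_mul_geometric γ hs.1 hs.2).mul_left (K * b 0)).of_nonneg_of_le
    (fun n => mul_nonneg (hb.pos n).le (pow_nonneg hs.1 n)) fun n => ?_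
  calc b n * s ^ n ≤ K * (((n : ℝ) + 1) / ((0 : ℕ) + 1)) ^ γ * b 0 * s ^ n :=
        mul_le_mul_of_nonneg_right (hK 0 n n.zero_le) (pow_nonneg hs.1 n)
    _ = K * b 0 * (((n : ℝ) + 1) ^ γ * s ^ n) := by
        rw [Nat.cast_zero, zero_add, div_one]; ring

theorem exists_succ_mul_le_sum_range (hb : HasPolynomialGrowth b) :
    ∃ C, ∀ N : ℕ, ((N : ℝ) + 1) * b N ≤ C * ∑ n ∈ Finset.range (N + 1), b n := by
  obtain ⟨K, hK0, γ, hK⟩ := hb.exists_le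
  refine ⟨2 * (K * 2 ^ γ), fun N => ?_⟩
  have hterm : ∀ n ∈ Finset.Ico (N / 2) (N + 1), b N ≤ K * 2 ^ γ * b n := fun n hn => by
    obtain ⟨hn_half, hn_le⟩ := Finset.mem_Ico.1 hn
    have hratio : ((N : ℝ) + 1) / (n + 1) ≤ 2 := by
      rw [div_le_iff₀ (by positivity)]
      exact_mod_cast (by lia : N + 1 ≤ 2 * (n + 1))
    refine (hK n N (by lia)).trans ?_
    have := hb.pos n
    gcongr
  have hcard : (N : ℝ) + 1 ≤ 2 * (Finset.Ico (N / 2) (N + 1)).card := by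
    rw [Nat.card_Ico]
    exact_mod_cast (by lia : N + 1 ≤ 2 * (N + 1 - N / 2))
  calc ((N : ℝ) + 1) * b N ≤ 2 * (Finset.Ico (N / 2) (N + 1)).card * b N :=
        mul_le_mul_of_nonneg_right hcard (hb.pos N).le
    _ = 2 * ((Finset.Ico (N / 2) (N + 1)).card • b N) := by rw [nsmul_eq_mul, mul_assoc]
    _ ≤ 2 * ∑ n ∈ Finset.Ico (N / 2) (N + 1), K * 2 ^ γ * b n := by
        gcongr; exact Finset.card_nsmul_le_sum _ _ _ hterm
    _ = 2 * (K * 2 ^ γ) * ∑ n ∈ Finset.Ico (N / 2) (N + 1), b n := by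
        rw [← Finset.mul_sum]; ring
    _ ≤ 2 * (K * 2 ^ γ) * ∑ n ∈ Finset.range (N + 1), b n := by
        gcongr
        · exact fun n _ _ => (hb.pos n).le
        · intro n hn
          simp only [Finset.mem_Ico] at hn
          exact Finset.mem_range.2 hn.2

theorem exists_tsum_mul_pow_le (hb : HasPolynomialGrowth b) :
    ∃ C > 0, ∀ (N : ℕ) (s : ℝ), s ∈ Ico (0 : ℝ) 1 → (1 - s)⁻¹ ≤ (N : ℝ) + 2 →
      ∑' n, b (n + N) * s ^ (n + N) ≤ C * (((N : ℝ) + 1) * b N) := by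
  obtain ⟨K, hK0, γ, hK⟩ := hb.exists_le
  refine ⟨K * γ.factorial * 2 ^ (γ + 1), by positivity, fun N s hs hN => ?_⟩
  have hbN := hb.pos N
  have hs0 := hs.1
  have hinv : 0 ≤ (1 - s)⁻¹ := inv_nonneg.2 (sub_pos.2 hs.2).le
  have hsum := summable_succ_pow_mul_geometric γ hs0 hs.2
  set D : ℝ := K * b N / (N + 1) ^ γ with hD
  have hterm : ∀ n, b (n + N) * s ^ (n + N) ≤ D * ((((n + N : ℕ) : ℝ) + 1) ^ γ * s ^ (n + N)) :=
    fun n =>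
      calc b (n + N) * s ^ (n + N)
          ≤ K * ((((n + N : ℕ) : ℝ) + 1) / (N + 1)) ^ γ * b N * s ^ (n + N) :=
            mul_le_mul_of_nonneg_right (hK N (n + N) (Nat.le_add_left N n)) (by positivity)
        _ = D * ((((n + N : ℕ) : ℝ) + 1) ^ γ * s ^ (n + N)) := by rw [hD, div_pow]; ring
  have htail : ∑' n : ℕ, (((n + N : ℕ) : ℝ) + 1) ^ γ * s ^ (n + N) ≤
      ∑' n : ℕ, ((n : ℝ) + 1) ^ γ * s ^ n :=
    tsum_comp_le_tsum_of_inj hsum (fun n => by positivity) (add_left_injective N)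
  calc ∑' n, b (n + N) * s ^ (n + N)
      ≤ ∑' n : ℕ, D * ((((n + N : ℕ) : ℝ) + 1) ^ γ * s ^ (n + N)) :=
        ((summable_nat_add_iff N).2 (hb.summable_mul_pow hs)).tsum_le_tsum hterm
          (((summable_nat_add_iff N).2 hsum).mul_left D)
    _ ≤ D * (γ.factorial * ((N : ℝ) + 2) ^ (γ + 1)) := by
        rw [tsum_mul_left]
        gcongr
        exact htail.trans ((tsum_succ_pow_mul_geometric_le γ hs0 hs.2).trans (by gcongr))
    _ ≤ D * (γ.factorial * (2 * ((N : ℝ) + 1)) ^ (γ + 1)) := by gcongr; linarith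
    _ = K * γ.factorial * 2 ^ (γ + 1) * (((N : ℝ) + 1) * b N) := by
        rw [hD, mul_pow]; field_simp; ring

theorem tsum_isTheta_sum_range (hb : HasPolynomialGrowth b) :
    (fun s => ∑' n, b n * s ^ n) =Θ[𝓟 (Ico 0 1)] fun s => ∑ n ∈ Finset.range ⌊(1 - s)⁻¹⌋₊, b n := by
  have hpartial : ∀ s ∈ Ico (0 : ℝ) 1, 0 ≤ ∑ n ∈ Finset.range ⌊(1 - s)⁻¹⌋₊, b n :=
    fun s _ => Finset.sum_nonneg fun n _ => (hb.pos n).le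
  have hterm : ∀ s ∈ Ico (0 : ℝ) 1, ∀ n, 0 ≤ b n * s ^ n :=
    fun s hs n => mul_nonneg (hb.pos n).le (pow_nonneg hs.1 n)
  have htsum : ∀ s ∈ Ico (0 : ℝ) 1, 0 ≤ ∑' n, b n * s ^ n := fun s hs => tsum_nonneg (hterm s hs)
  constructor
  · obtain ⟨C, hC0, hC⟩ := hb.exists_tsum_mul_pow_le
    obtain ⟨D, hD⟩ := hb.exists_succ_mul_le_sum_range
    refine (isBigO_principal_iff_of_nonneg htsum hpartial).2 ⟨1 + C * D, fun s hs => ?_⟩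
    obtain ⟨N, hfloor, -, hN⟩ := exists_floor_inv_one_sub_eq_succ hs
    rw [hfloor]
    calc ∑' n, b n * s ^ n
        = ∑ n ∈ Finset.range N, b n * s ^ n + ∑' n, b (n + N) * s ^ (n + N) :=
          ((hb.summable_mul_pow hs).sum_add_tsum_nat_add N).symm
      _ ≤ ∑ n ∈ Finset.range (N + 1), b n + C * (((N : ℝ) + 1) * b N) := by
          refine add_le_add ?_ (hC N s hs hN)
          rw [Finset.sum_range_succ]
          exact (Finset.sum_le_sum fun n _ => mul_le_of_le_one_right (hb.pos n).le
            (pow_le_one₀ hs.1 hs.2.le)).trans (le_add_of_nonneg_right (hb.pos N).le)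
      _ ≤ ∑ n ∈ Finset.range (N + 1), b n + C * (D * ∑ n ∈ Finset.range (N + 1), b n) :=
          add_le_add_right (mul_le_mul_of_nonneg_left (hD N) hC0.le) _
      _ = (1 + C * D) * ∑ n ∈ Finset.range (N + 1), b n := by ring
  · refine (isBigO_principal_iff_of_nonneg hpartial htsum).2 ⟨Real.exp 1, fun s hs => ?_⟩
    obtain ⟨N, hfloor, hN, -⟩ := exists_floor_inv_one_sub_eq_succ hs
    rw [hfloor]
    calc ∑ n ∈ Finset.range (N + 1), b n
        ≤ ∑ n ∈ Finset.range (N + 1), Real.exp 1 * (b n * s ^ n) := by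
          refine Finset.sum_le_sum fun n hn => ?_
          have hnN : (n : ℝ) ≤ N := mod_cast Nat.lt_succ_iff.1 (Finset.mem_range.1 hn)
          rw [mul_left_comm]
          exact le_mul_of_one_le_right (hb.pos n).le
            (one_le_exp_one_mul_pow hs (by linarith))
      _ ≤ Real.exp 1 * ∑' n, b n * s ^ n := by
          rw [← Finset.mul_sum]
          gcongr
          exact (hb.summable_mul_pow hs).sum_le_tsum _ fun n _ => hterm s hs n

end HasPolynomialGrowth

theorem isBigO_tsum_mul_pow {a b : ℕ → ℝ} (ha : ∀ n, 0 ≤ a n) (hb : ∀ n, 0 ≤ b n)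
    (hab : a =O[⊤] b) (hsum : ∀ s ∈ Ico (0 : ℝ) 1, Summable fun n => b n * s ^ n) :
    (fun s => ∑' n, a n * s ^ n) =O[𝓟 (Ico 0 1)] fun s => ∑' n, b n * s ^ n := by
  rw [← principal_univ] at hab
  obtain ⟨C, hC⟩ := (isBigO_principal_iff_of_nonneg (fun n _ => ha n) fun n _ => hb n).1 hab
  refine (isBigO_principal_iff_of_nonneg
    (fun s hs => tsum_nonneg fun n => mul_nonneg (ha n) (pow_nonneg hs.1 n))
    fun s hs => tsum_nonneg fun n => mul_nonneg (hb n) (pow_nonneg hs.1 n)).2 ⟨C, fun s hs => ?_⟩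
  have hterm : ∀ n, a n * s ^ n ≤ C * (b n * s ^ n) := fun n => by
    rw [← mul_assoc]
    exact mul_le_mul_of_nonneg_right (hC n (mem_univ n)) (pow_nonneg hs.1 n)
  have hsumC := (hsum s hs).mul_left C
  rw [← tsum_mul_left]
  exact (hsumC.of_nonneg_of_le (fun n => mul_nonneg (ha n) (pow_nonneg hs.1 n)) hterm).tsum_le_tsum
    hterm hsumC

theorem tsum_mul_pow_isTheta_tsum_mul_pow {a b : ℕ → ℝ} (ha : ∀ n, 0 ≤ a n) (hb : ∀ n, 0 ≤ b n)
    (hab : a =Θ[⊤] b) (hsum : ∀ s ∈ Ico (0 : ℝ) 1, Summable fun n => b n * s ^ n) :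
    (fun s => ∑' n, a n * s ^ n) =Θ[𝓟 (Ico 0 1)] fun s => ∑' n, b n * s ^ n := by
  refine ⟨isBigO_tsum_mul_pow ha hb hab.isBigO hsum, isBigO_tsum_mul_pow hb ha hab.isBigO_symm ?_⟩
  exact fun s hs => summable_of_isBigO (hsum s hs)
    ((hab.isBigO.mono le_top).mul (isBigO_refl (fun n => s ^ n) _))

/-- The points `1 - 1 / (n + 1)`, at which the distance to `1` is `1 / (n + 1)`; they cut `[0, 1)`
into the intervals of the Riemann sums below. -/
noncomputable def node (n : ℕ) : ℝ := 1 - 1 / ((n : ℝ) + 1)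

theorem one_sub_node (n : ℕ) : 1 - node n = 1 / ((n : ℝ) + 1) := sub_sub_cancel _ _

theorem node_zero : node 0 = 0 := by simp [node]

theorem node_mono : Monotone node := fun m n hmn =>
  sub_le_sub_left (one_div_le_one_div_of_le (by positivity) (by gcongr)) 1

theorem node_mem_Ico (n : ℕ) : node n ∈ Ico (0 : ℝ) 1 :=
  ⟨node_zero.symm.trans_le (node_mono n.zero_le), sub_lt_self 1 (by positivity)⟩

theorem node_succ_sub_node (n : ℕ) : node (n + 1) - node n = 1 / (((n : ℝ) + 1) * (n + 2)) := by
  rw [node, node]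
  push_cast
  field_simp
  ring

theorem node_le_iff {n : ℕ} {s : ℝ} (hs : s < 1) : node n ≤ s ↔ (n : ℝ) + 1 ≤ (1 - s)⁻¹ := by
  rw [le_inv_comm₀ (by positivity) (sub_pos.2 hs), ← one_div, node, sub_le_comm]

theorem le_node_succ_iff {n : ℕ} {s : ℝ} (hs : s < 1) :
    s ≤ node (n + 1) ↔ (1 - s)⁻¹ ≤ (n : ℝ) + 2 := by
  rw [inv_le_comm₀ (sub_pos.2 hs) (by positivity), ← one_div, node, le_sub_comm]
  push_cast
  ring_nf

theorem one_sub_node_le_two_mul (n : ℕ) : 1 - node n ≤ 2 * (1 - node (n + 1)) := by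
  rw [one_sub_node, one_sub_node, mul_one_div, div_le_div_iff₀ (by positivity) (by positivity)]
  push_cast
  linarith [n.cast_nonneg (α := ℝ)]

/-- The Riemann sum terms of `h` on the intervals `[node n, node (n + 1)]`, up to constants: the
mesh length `1 / ((n + 1) (n + 2))` is replaced by the comparable `1 / (n + 1) ^ 2`. -/
noncomputable def riemannTerm (h : ℝ → ℝ) (n : ℕ) : ℝ := h (node n) / ((n : ℝ) + 1) ^ 2

namespace IsHarnack

variable {h : ℝ → ℝ}

theorem riemannTerm_pos (hh : IsHarnack h) (n : ℕ) : 0 < riemannTerm h n :=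
  div_pos (hh.pos _ (node_mem_Ico n)) (by positivity)

theorem hasPolynomialGrowth_riemannTerm (hh : IsHarnack h) :
    HasPolynomialGrowth (riemannTerm h) where
  pos := hh.riemannTerm_pos
  exists_le := by
    obtain ⟨A, hA, γ, hγ⟩ := hh.exists_le_div_pow_mul
    refine ⟨A, zero_lt_one.trans_le hA, γ, fun N n hNn => ?_⟩
    have hN := hh.pos _ (node_mem_Ico N)
    have hgrowth := (hγ (node N) (node n) (node_mem_Ico N).1 (node_mono hNn) (node_mem_Ico n).2).1
    rw [one_sub_node, one_sub_node, one_div, one_div, inv_div_inv] at hgrowth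
    rw [riemannTerm, riemannTerm, mul_div_assoc']
    gcongr

theorem exists_integral_node_le_and_le (hh : IsHarnack h)
    (hint : ∀ s ∈ Ico (0 : ℝ) 1, IntervalIntegrable h volume 0 s) :
    ∃ K ≥ 0, ∀ n, ∫ t in node n..node (n + 1), h t ≤ K * riemannTerm h n ∧
      riemannTerm h (n + 1) ≤ K * ∫ t in node n..node (n + 1), h t := by
  obtain ⟨K, hK1, hK⟩ := hh.exists_one_le_le_mul
  have hK0 : 0 ≤ K := zero_le_one.trans hK1
  refine ⟨K, hK0, fun n => ?_⟩
  have hle : node n ≤ node (n + 1) := node_mono n.le_succ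
  have hhint : IntervalIntegrable h volume (node n) (node (n + 1)) :=
    (hint _ (node_mem_Ico n)).symm.trans (hint _ (node_mem_Ico (n + 1)))
  have hmem : ∀ t ∈ Icc (node n) (node (n + 1)), t ∈ Ico (0 : ℝ) 1 := fun t ht =>
    ⟨(node_mem_Ico n).1.trans ht.1, ht.2.trans_lt (node_mem_Ico (n + 1)).2⟩
  have hdouble := one_sub_node_le_two_mul n
  have hn := hh.pos _ (node_mem_Ico n)
  have hn_succ := hh.pos _ (node_mem_Ico (n + 1))
  constructor
  · calc ∫ t in node n..node (n + 1), h t ≤ ∫ _ in node n..node (n + 1), K * h (node n) :=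
          intervalIntegral.integral_mono_on hle hhint intervalIntegrable_const fun t ht =>
            hK _ (node_mem_Ico n) t (hmem t ht) (by linarith [ht.2]) (by linarith [ht.1, ht.2])
      _ = K * (h (node n) / (((n : ℝ) + 1) * (n + 2))) := by
          rw [intervalIntegral.integral_const, smul_eq_mul, node_succ_sub_node]; ring
      _ ≤ K * riemannTerm h n := by rw [riemannTerm, sq]; gcongr; norm_num
  · calc riemannTerm h (n + 1) ≤ h (node (n + 1)) / (((n : ℝ) + 1) * (n + 2)) := by
          rw [riemannTerm]
          push_cast
          gcongr
          linarith [n.cast_nonneg (α := ℝ)]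
      _ = ∫ _ in node n..node (n + 1), h (node (n + 1)) := by
          rw [intervalIntegral.integral_const, smul_eq_mul, node_succ_sub_node]; ring
      _ ≤ ∫ t in node n..node (n + 1), K * h t :=
          intervalIntegral.integral_mono_on hle intervalIntegrable_const (hhint.const_mul K)
            fun t ht => hK t (hmem t ht) _ (node_mem_Ico (n + 1)) (by linarith [ht.1])
              (by linarith [ht.1, ht.2])
      _ = K * ∫ t in node n..node (n + 1), h t := intervalIntegral.integral_const_mul _ _

theorem exists_integral_zero_node_le_and_le (hh : IsHarnack h)
    (hint : ∀ s ∈ Ico (0 : ℝ) 1, IntervalIntegrable h volume 0 s) :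
    ∃ K ≥ 0, ∀ N, ∫ t in 0..node N, h t ≤ K * ∑ n ∈ Finset.range N, riemannTerm h n ∧
      ∑ n ∈ Finset.range N, riemannTerm h (n + 1) ≤ K * ∫ t in 0..node N, h t := by
  obtain ⟨K, hK0, hK⟩ := hh.exists_integral_node_le_and_le hint
  refine ⟨K, hK0, fun N => ?_⟩
  have hsum : ∫ t in 0..node N, h t = ∑ n ∈ Finset.range N, ∫ t in node n..node (n + 1), h t := by
    rw [intervalIntegral.sum_integral_adjacent_intervals fun n _ =>
      (hint _ (node_mem_Ico n)).symm.trans (hint _ (node_mem_Ico (n + 1))), node_zero]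
  rw [hsum, Finset.mul_sum, Finset.mul_sum]
  exact ⟨Finset.sum_le_sum fun n _ => (hK n).1, Finset.sum_le_sum fun n _ => (hK n).2⟩

theorem monotoneOn_integral (hh : IsHarnack h)
    (hint : ∀ s ∈ Ico (0 : ℝ) 1, IntervalIntegrable h volume 0 s) :
    MonotoneOn (fun s => ∫ t in 0..s, h t) (Ico 0 1) := fun _ hr _ hs hrs =>
  intervalIntegral.integral_mono_interval le_rfl hr.1 hrs
    ((ae_restrict_iff' measurableSet_Ioc).2 <| Eventually.of_forall fun t ht =>
      (hh.pos t ⟨ht.1.le, ht.2.trans_lt hs.2⟩).le) (hint _ hs)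

theorem integral_nonneg (hh : IsHarnack h) {s : ℝ} (hs : s ∈ Ico (0 : ℝ) 1) :
    0 ≤ ∫ t in 0..s, h t :=
  intervalIntegral.integral_nonneg hs.1 fun t ht => (hh.pos t ⟨ht.1, ht.2.trans_lt hs.2⟩).le

theorem integral_add_one_isTheta_sum_range (hh : IsHarnack h)
    (hint : ∀ s ∈ Ico (0 : ℝ) 1, IntervalIntegrable h volume 0 s) :
    (fun s => (∫ t in 0..s, h t) + 1) =Θ[𝓟 (Ico 0 1)]
      fun s => ∑ n ∈ Finset.range ⌊(1 - s)⁻¹⌋₊, riemannTerm h n := by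
  obtain ⟨K, hK0, hK⟩ := hh.exists_integral_zero_node_le_and_le hint
  have hmono := hh.monotoneOn_integral hint
  have hpos := hh.riemannTerm_pos
  have hb0 := hpos 0
  have hF1 : ∀ s ∈ Ico (0 : ℝ) 1, 0 ≤ (∫ t in 0..s, h t) + 1 := fun s hs =>
    add_nonneg (hh.integral_nonneg hs) zero_le_one
  have hS : ∀ s ∈ Ico (0 : ℝ) 1, 0 ≤ ∑ n ∈ Finset.range ⌊(1 - s)⁻¹⌋₊, riemannTerm h n :=
    fun s _ => Finset.sum_nonneg fun n _ => (hpos n).le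
  constructor
  · refine (isBigO_principal_iff_of_nonneg hF1 hS).2 ⟨K + (riemannTerm h 0)⁻¹, fun s hs => ?_⟩
    obtain ⟨N, hfloor, -, hN⟩ := exists_floor_inv_one_sub_eq_succ hs
    have hone : 1 ≤ (riemannTerm h 0)⁻¹ * ∑ n ∈ Finset.range (N + 1), riemannTerm h n := by
      rw [le_inv_mul_iff₀ hb0, mul_one]
      exact Finset.single_le_sum (fun n _ => (hpos n).le) (Finset.mem_range.2 N.succ_pos)
    rw [hfloor, add_mul]
    exact add_le_add ((hmono hs (node_mem_Ico (N + 1)) ((le_node_succ_iff hs.2).2 hN)).trans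
      (hK (N + 1)).1) hone
  · refine (isBigO_principal_iff_of_nonneg hS hF1).2 ⟨K + riemannTerm h 0, fun s hs => ?_⟩
    obtain ⟨N, hfloor, hN, -⟩ := exists_floor_inv_one_sub_eq_succ hs
    have hFs := hh.integral_nonneg hs
    rw [hfloor, Finset.sum_range_succ']
    calc ∑ n ∈ Finset.range N, riemannTerm h (n + 1) + riemannTerm h 0
        ≤ K * (∫ t in 0..s, h t) + riemannTerm h 0 := by
          have := hmono (node_mem_Ico N) hs ((node_le_iff hs.2).2 hN)
          gcongr
          exact (hK N).2.trans (by gcongr)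
      _ ≤ (K + riemannTerm h 0) * ((∫ t in 0..s, h t) + 1) := by
          linarith [mul_nonneg hb0.le hFs]

theorem tsum_mul_pow_isTheta_integral_add_one (hh : IsHarnack h)
    (hint : ∀ s ∈ Ico (0 : ℝ) 1, IntervalIntegrable h volume 0 s) {a : ℕ → ℝ}
    (ha : ∀ n, 0 ≤ a n) (hab : a =Θ[⊤] riemannTerm h) :
    (fun s => ∑' n, a n * s ^ n) =Θ[𝓟 (Ico 0 1)] fun s => (∫ t in 0..s, h t) + 1 := by
  have hgrowth := hh.hasPolynomialGrowth_riemannTerm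
  have hb : ∀ n, 0 ≤ riemannTerm h n := fun n => (hh.riemannTerm_pos n).le
  have htsum := tsum_mul_pow_isTheta_tsum_mul_pow ha hb hab fun s hs =>
    hgrowth.summable_mul_pow hs
  exact (htsum.trans hgrowth.tsum_isTheta_sum_range).trans
    (hh.integral_add_one_isTheta_sum_range hint).symm

end IsHarnack

theorem hat_eq_neg_integral (ω : ℝ → ℝ) : hat ω = -fun r => ∫ t in 1..r, ω t :=
  funext fun r => intervalIntegral.integral_symm 1 r

theorem hat_one (ω : ℝ → ℝ) : hat ω 1 = 0 := intervalIntegral.integral_same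

theorem absolutelyContinuousOnInterval_hat {ω : ℝ → ℝ} (hω : IntervalIntegrable ω volume 0 1) :
    AbsolutelyContinuousOnInterval (hat ω) 0 1 := by
  rw [hat_eq_neg_integral]
  exact (hω.absolutelyContinuousOnInterval_intervalIntegral right_mem_uIcc).neg

theorem continuousOn_hat {ω : ℝ → ℝ} (hω : IntervalIntegrable ω volume 0 1) :
    ContinuousOn (hat ω) (Icc 0 1) := by
  rw [← uIcc_of_le zero_le_one]
  exact (absolutelyContinuousOnInterval_hat hω).continuousOn

theorem ae_deriv_hat {ω : ℝ → ℝ} (hω : IntervalIntegrable ω volume 0 1) :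
    ∀ᵐ r, r ∈ Ioc (0 : ℝ) 1 → deriv (hat ω) r = -ω r := by
  filter_upwards [hω.ae_hasDerivAt_integral] with r hr hr_mem
  rw [hat_eq_neg_integral]
  refine (hr ?_ 1 right_mem_uIcc).neg.deriv
  rw [uIcc_of_le zero_le_one]
  exact Ioc_subset_Icc_self hr_mem

theorem moment_eq_integral_hat {ω : ℝ → ℝ} (hω : IntervalIntegrable ω volume 0 1) {x : ℝ}
    (hx : 1 ≤ x) : moment ω x = ∫ r in 0..1, x * r ^ (x - 1) * hat ω r := by
  have hpow : ContDiff ℝ 1 fun r : ℝ => r ^ x :=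
    Real.contDiff_rpow_const_of_le (by exact_mod_cast hx)
  have hpow_deriv : deriv (fun r : ℝ => r ^ x) = fun r => x * r ^ (x - 1) :=
    funext fun r => (Real.hasDerivAt_rpow_const (Or.inr hx)).deriv
  have hparts := hpow.contDiffOn.absolutelyContinuousOnInterval.integral_mul_deriv_eq_deriv_mul
    (absolutelyContinuousOnInterval_hat hω)
  rw [hpow_deriv, hat_one, Real.zero_rpow (by linarith), mul_zero, zero_mul, sub_zero,
    zero_sub] at hparts
  rw [← neg_neg (∫ r in 0..1, x * r ^ (x - 1) * hat ω r), ← hparts, moment,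
    ← intervalIntegral.integral_neg]
  refine intervalIntegral.integral_congr_ae ?_
  rw [uIoc_of_le zero_le_one]
  filter_upwards [ae_deriv_hat hω] with r hr hr_mem
  rw [hr hr_mem, mul_neg, neg_neg]

theorem integral_mul_exp_le_two (x : ℝ) :
    ∫ r in 0..1, x * Real.exp (-(x * (1 - r) / 2)) ≤ 2 := by
  have hderiv : ∀ r : ℝ, HasDerivAt (fun r => 2 * Real.exp (-(x * (1 - r) / 2)))
      (x * Real.exp (-(x * (1 - r) / 2))) r := fun r => by
    have hexponent : HasDerivAt (fun r => -(x * (1 - r) / 2)) (x / 2) r := by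
      exact ((((hasDerivAt_id r).const_sub 1).const_mul x).div_const 2).fun_neg.congr_deriv
        (by ring)
    exact (hexponent.exp.const_mul 2).congr_deriv (by ring)
  rw [intervalIntegral.integral_eq_sub_of_hasDerivAt (fun r _ => hderiv r)
    (Continuous.intervalIntegrable (by fun_prop) 0 1), sub_self, mul_zero, zero_div, neg_zero,
    Real.exp_zero, mul_one]
  exact sub_le_self 2 (by positivity)

theorem one_sub_one_div_mem_Ico {x : ℝ} (hx : 1 ≤ x) : 1 - 1 / x ∈ Ico (0 : ℝ) 1 :=
  ⟨sub_nonneg.2 (div_le_one_of_le₀ hx (by linarith)), sub_lt_self 1 (by positivity)⟩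

theorem half_le_one_sub_one_div_rpow {x : ℝ} (hx : 1 ≤ x) :
    1 / 2 ≤ (1 - 1 / (2 * x)) ^ x := by
  have hbernoulli := one_add_mul_self_le_rpow_one_add (s := -(1 / (2 * x)))
    (by linarith [(one_sub_one_div_mem_Ico (x := 2 * x) (by linarith)).1]) hx
  have hx0 : x ≠ 0 := by linarith
  calc (1 / 2 : ℝ) = 1 + x * -(1 / (2 * x)) := by field_simp; norm_num
    _ ≤ (1 - 1 / (2 * x)) ^ x := hbernoulli

theorem rpow_sub_one_le_exp {x r : ℝ} (hx : 1 ≤ x) (hr : r ∈ Icc (0 : ℝ) 1) :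
    r ^ (x - 1) ≤ Real.exp (1 - x * (1 - r)) :=
  calc r ^ (x - 1) ≤ Real.exp (r - 1) ^ (x - 1) :=
        Real.rpow_le_rpow hr.1 (by linarith [Real.add_one_le_exp (r - 1)]) (by linarith)
    _ = Real.exp ((r - 1) * (x - 1)) := (Real.exp_mul _ _).symm
    _ ≤ Real.exp (1 - x * (1 - r)) := Real.exp_le_exp.2 (by linarith [hr.1])

theorem one_add_pow_le_exp (γ : ℕ) {y : ℝ} (hy : 0 ≤ y) :
    (1 + y) ^ γ ≤ 2 ^ γ * γ.factorial * Real.exp ((1 + y) / 2) := by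
  have h := Real.pow_div_factorial_le_exp ((1 + y) / 2) (by positivity) γ
  rwa [div_pow, div_div, div_le_iff₀' (by positivity)] at h

theorem riemannTerm_one_div (ω : ℝ → ℝ) (p α : ℝ) (n : ℕ) :
    riemannTerm (fun t => 1 / (hat ω t ^ p * (1 - t) ^ α)) n =
      ((n : ℝ) + 1) ^ (α - 2) / hat ω (node n) ^ p := by
  have hn : 0 < (n : ℝ) + 1 := by positivity
  rw [riemannTerm, one_sub_node, one_div, one_div, Real.inv_rpow hn.le, Real.rpow_sub hn,
    Real.rpow_two]
  field_simp

/-- The class `D̂` of upper doubling radial weights on `[0, 1)`, for which `hat ω` is positive and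
`hat ω r ≤ C * hat ω ((1 + r) / 2)`. -/
structure IsUpperDoublingWeight (ω : ℝ → ℝ) : Prop where
  nonneg : ∀ r ∈ Ico (0 : ℝ) 1, 0 ≤ ω r
  intervalIntegrable : IntervalIntegrable ω volume 0 1
  hat_pos : ∀ r ∈ Ico (0 : ℝ) 1, 0 < hat ω r
  exists_le_mul : ∃ C, ∀ r ∈ Ico (0 : ℝ) 1, hat ω r ≤ C * hat ω ((1 + r) / 2)

namespace IsUpperDoublingWeight

variable {ω : ℝ → ℝ}

theorem ae_restrict_nonneg (hω : IsUpperDoublingWeight ω) {r : ℝ} (hr : 0 ≤ r) :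
    ∀ᵐ t ∂volume.restrict (Ioc r 1), 0 ≤ ω t := by
  rw [← restrict_Ico_eq_restrict_Ioc, ae_restrict_iff' measurableSet_Ico]
  exact Eventually.of_forall fun t ht => hω.nonneg t ⟨hr.trans ht.1, ht.2⟩

theorem antitoneOn_hat (hω : IsUpperDoublingWeight ω) : AntitoneOn (hat ω) (Icc 0 1) := by
  intro r hr s hs hrs
  refine intervalIntegral.integral_mono_interval hrs hs.2 le_rfl
    (hω.ae_restrict_nonneg hr.1) (hω.intervalIntegrable.mono_set ?_)
  rw [uIcc_of_le zero_le_one, uIcc_of_le hr.2]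
  exact Icc_subset_Icc_left hr.1

theorem hat_nonneg (hω : IsUpperDoublingWeight ω) {r : ℝ} (hr : r ∈ Icc (0 : ℝ) 1) :
    0 ≤ hat ω r :=
  (hat_one ω).symm.trans_le (hω.antitoneOn_hat hr (right_mem_Icc.2 zero_le_one) hr.2)

theorem isHarnack_hat (hω : IsUpperDoublingWeight ω) : IsHarnack (hat ω) where
  pos := hω.hat_pos
  exists_le_mul := by
    obtain ⟨C, hC⟩ := hω.exists_le_mul
    have hC0 : 0 < C := (pos_iff_pos_of_mul_pos
      ((hω.hat_pos 0 (by norm_num)).trans_le (hC 0 (by norm_num)))).2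
      (hω.hat_pos _ (by norm_num))
    refine ⟨C, fun r hr t ht _ htr => (hC t ht).trans (mul_le_mul_of_nonneg_left ?_ hC0.le)⟩
    exact hω.antitoneOn_hat ⟨hr.1, hr.2.le⟩ ⟨by linarith [ht.1], by linarith [ht.2]⟩ (by linarith)

theorem exists_hat_le_one_add_pow_mul (hω : IsUpperDoublingWeight ω) :
    ∃ A > 0, ∃ γ : ℕ, ∀ x ≥ 1, ∀ r ∈ Icc (0 : ℝ) 1,
      hat ω r ≤ A * (1 + x * (1 - r)) ^ γ * hat ω (1 - 1 / x) := by
  obtain ⟨A, hA, γ, hγ⟩ := hω.isHarnack_hat.exists_le_div_pow_mul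
  have hA0 : 0 < A := zero_lt_one.trans_le hA
  refine ⟨A, hA0, γ, fun x hx r hr => ?_⟩
  have hx0 : 0 < x := zero_lt_one.trans_le hx
  have hu := one_sub_one_div_mem_Ico hx
  have hhat_u := hω.hat_pos _ hu
  have hdist : 0 ≤ x * (1 - r) := mul_nonneg hx0.le (sub_nonneg.2 hr.2)
  rcases le_total r (1 - 1 / x) with hru | hur
  · calc hat ω r ≤ A * ((1 - r) / (1 - (1 - 1 / x))) ^ γ * hat ω (1 - 1 / x) :=
          (hγ r _ hr.1 hru hu.2).2
      _ = A * (x * (1 - r)) ^ γ * hat ω (1 - 1 / x) := by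
          rw [sub_sub_cancel, div_div_eq_mul_div, div_one, mul_comm x]
      _ ≤ A * (1 + x * (1 - r)) ^ γ * hat ω (1 - 1 / x) := by gcongr; linarith
  · calc hat ω r ≤ 1 * hat ω (1 - 1 / x) := by
          rw [one_mul]; exact hω.antitoneOn_hat ⟨hu.1, hu.2.le⟩ hr hur
      _ ≤ A * (1 + x * (1 - r)) ^ γ * hat ω (1 - 1 / x) := by
          gcongr
          exact one_le_mul_of_one_le_of_one_le hA (one_le_pow₀ (by linarith))

theorem exists_moment_le (hω : IsUpperDoublingWeight ω) :
    ∃ C, ∀ x ≥ 1, moment ω x ≤ C * hat ω (1 - 1 / x) := by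
  obtain ⟨A, hA0, γ, hγ⟩ := hω.exists_hat_le_one_add_pow_mul
  set B : ℝ := A * (2 ^ γ * γ.factorial) * Real.exp (3 / 2) with hB
  refine ⟨2 * B, fun x hx => ?_⟩
  have hx0 : 0 < x := zero_lt_one.trans_le hx
  have hhat_u := hω.hat_pos _ (one_sub_one_div_mem_Ico hx)
  have hbound : ∀ r ∈ Icc (0 : ℝ) 1, x * r ^ (x - 1) * hat ω r ≤
      B * hat ω (1 - 1 / x) * (x * Real.exp (-(x * (1 - r) / 2))) := fun r hr => by
    have hdist : 0 ≤ x * (1 - r) := mul_nonneg hx0.le (sub_nonneg.2 hr.2)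
    have hexp : Real.exp (1 - x * (1 - r)) * Real.exp ((1 + x * (1 - r)) / 2) =
        Real.exp (3 / 2) * Real.exp (-(x * (1 - r) / 2)) := by
      rw [← Real.exp_add, ← Real.exp_add]; ring_nf
    calc x * r ^ (x - 1) * hat ω r
        ≤ x * Real.exp (1 - x * (1 - r)) * (A * (2 ^ γ * γ.factorial *
            Real.exp ((1 + x * (1 - r)) / 2)) * hat ω (1 - 1 / x)) := by
          refine mul_le_mul ?_ ((hγ x hx r hr).trans ?_) ?_ (by positivity)
          · gcongr; exact rpow_sub_one_le_exp hx hr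
          · gcongr; exact one_add_pow_le_exp γ hdist
          · exact hω.hat_nonneg hr
      _ = B * hat ω (1 - 1 / x) * (x * Real.exp (-(x * (1 - r) / 2))) := by
          rw [hB]
          linear_combination
            (x * A * 2 ^ γ * γ.factorial * hat ω (1 - 1 / x)) * hexp
  calc moment ω x = ∫ r in 0..1, x * r ^ (x - 1) * hat ω r :=
        moment_eq_integral_hat hω.intervalIntegrable hx
    _ ≤ ∫ r in 0..1, B * hat ω (1 - 1 / x) * (x * Real.exp (-(x * (1 - r) / 2))) := by
        refine intervalIntegral.integral_mono_on zero_le_one ?_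
          (Continuous.intervalIntegrable (by fun_prop) 0 1) hbound
        refine ContinuousOn.intervalIntegrable ?_
        rw [uIcc_of_le zero_le_one]
        exact ((Real.continuous_rpow_const (by linarith)).const_mul x).continuousOn.mul
          (continuousOn_hat hω.intervalIntegrable)
    _ = B * hat ω (1 - 1 / x) * ∫ r in 0..1, x * Real.exp (-(x * (1 - r) / 2)) :=
        intervalIntegral.integral_const_mul _ _
    _ ≤ B * hat ω (1 - 1 / x) * 2 := by gcongr; exact integral_mul_exp_le_two x
    _ = 2 * B * hat ω (1 - 1 / x) := by ring

theorem rpow_mul_hat_le_moment (hω : IsUpperDoublingWeight ω) {x u : ℝ} (hx : 0 ≤ x)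
    (hu : u ∈ Icc (0 : ℝ) 1) : u ^ x * hat ω u ≤ moment ω x := by
  have hsubset : uIcc u 1 ⊆ uIcc 0 1 := by
    rw [uIcc_of_le zero_le_one, uIcc_of_le hu.2]
    exact Icc_subset_Icc_left hu.1
  have hint : IntervalIntegrable (fun r => r ^ x * ω r) volume 0 1 :=
    hω.intervalIntegrable.continuousOn_mul (Real.continuous_rpow_const hx).continuousOn
  calc u ^ x * hat ω u = ∫ r in u..1, u ^ x * ω r :=
        (intervalIntegral.integral_const_mul _ _).symm
    _ ≤ ∫ r in u..1, r ^ x * ω r := by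
        refine intervalIntegral.integral_mono_on_of_le_Ioo hu.2
          ((hω.intervalIntegrable.mono_set hsubset).const_mul _) (hint.mono_set hsubset)
          fun r hr => ?_
        have hωr := hω.nonneg r ⟨hu.1.trans hr.1.le, hr.2⟩
        gcongr
        exacts [hu.1, hr.1.le]
    _ ≤ moment ω x := by
        refine intervalIntegral.integral_mono_interval hu.1 hu.2 le_rfl ?_ hint
        filter_upwards [hω.ae_restrict_nonneg le_rfl, ae_restrict_mem measurableSet_Ioc]
          with r hr hr_mem
        exact mul_nonneg (Real.rpow_nonneg hr_mem.1.le x) hr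

theorem moment_nonneg (hω : IsUpperDoublingWeight ω) {x : ℝ} (hx : 0 ≤ x) : 0 ≤ moment ω x :=
  (mul_nonneg (Real.rpow_nonneg le_rfl x) (hω.hat_nonneg (left_mem_Icc.2 zero_le_one))).trans
    (hω.rpow_mul_hat_le_moment hx (left_mem_Icc.2 zero_le_one))

theorem exists_hat_le_mul_moment (hω : IsUpperDoublingWeight ω) :
    ∃ C, ∀ x ≥ 1, hat ω (1 - 1 / x) ≤ C * moment ω x := by
  obtain ⟨K, hK1, hK⟩ := hω.isHarnack_hat.exists_one_le_le_mul
  refine ⟨K * 2, fun x hx => ?_⟩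
  have hx0 : 0 < x := zero_lt_one.trans_le hx
  have hu := one_sub_one_div_mem_Ico (x := 2 * x) (by linarith)
  have hhat_u := hω.hat_pos _ hu
  have hhalf : 2 * (1 / (2 * x)) = 1 / x := by field_simp
  have hx_inv : 0 < 1 / x := by positivity
  calc hat ω (1 - 1 / x) ≤ K * hat ω (1 - 1 / (2 * x)) :=
        hK _ hu _ (one_sub_one_div_mem_Ico hx) (by linarith) (by linarith)
    _ ≤ K * (2 * (1 - 1 / (2 * x)) ^ x * hat ω (1 - 1 / (2 * x))) := by
        gcongr
        refine le_mul_of_one_le_left hhat_u.le ?_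
        linarith [half_le_one_sub_one_div_rpow hx]
    _ = K * 2 * ((1 - 1 / (2 * x)) ^ x * hat ω (1 - 1 / (2 * x))) := by ring
    _ ≤ K * 2 * moment ω x := by
        gcongr
        exact hω.rpow_mul_hat_le_moment hx0.le ⟨hu.1, hu.2.le⟩

theorem moment_isTheta_hat (hω : IsUpperDoublingWeight ω) :
    moment ω =Θ[𝓟 (Ici 1)] fun x => hat ω (1 - 1 / x) := by
  have hhat : ∀ x ∈ Ici (1 : ℝ), 0 ≤ hat ω (1 - 1 / x) := fun x hx =>
    (hω.hat_pos _ (one_sub_one_div_mem_Ico hx)).le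
  have hmoment : ∀ x ∈ Ici (1 : ℝ), 0 ≤ moment ω x := fun x hx =>
    hω.moment_nonneg (zero_le_one.trans hx)
  exact ⟨(isBigO_principal_iff_of_nonneg hmoment hhat).2 hω.exists_moment_le,
    (isBigO_principal_iff_of_nonneg hhat hmoment).2 hω.exists_hat_le_mul_moment⟩

theorem moment_isTheta_hat_node (hω : IsUpperDoublingWeight ω) :
    (fun n : ℕ => moment ω (2 * n + 1)) =Θ[⊤] fun n => hat ω (node n) := by
  have hone : ∀ n : ℕ, 1 ≤ 2 * (n : ℝ) + 1 := fun n => by linarith [n.cast_nonneg (α := ℝ)]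
  have htendsto : Tendsto (fun n : ℕ => 2 * (n : ℝ) + 1) ⊤ (𝓟 (Ici 1)) :=
    tendsto_principal.2 (Eventually.of_forall hone)
  have hmoment : (fun n : ℕ => moment ω (2 * n + 1)) =Θ[⊤]
      fun n : ℕ => hat ω (1 - 1 / (2 * n + 1)) :=
    ⟨hω.moment_isTheta_hat.isBigO.comp_tendsto htendsto,
      hω.moment_isTheta_hat.isBigO_symm.comp_tendsto htendsto⟩
  refine hmoment.trans (hω.isHarnack_hat.comp_isTheta_comp
    (fun n => one_sub_one_div_mem_Ico (hone n)) node_mem_Ico (fun n => ?_) fun n => ?_)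
  · rw [one_sub_node, sub_sub_cancel, mul_one_div,
      div_le_div_iff₀ (by positivity) (by positivity)]
    linarith [n.cast_nonneg (α := ℝ)]
  · rw [one_sub_node, sub_sub_cancel, mul_one_div,
      div_le_div_iff₀ (by positivity) (by positivity)]
    linarith [n.cast_nonneg (α := ℝ)]

theorem isHarnack_one_div (hω : IsUpperDoublingWeight ω) (p α : ℝ) :
    IsHarnack fun t => 1 / (hat ω t ^ p * (1 - t) ^ α) := by
  simpa only [Real.rpow_neg_one, one_div] using
    ((hω.isHarnack_hat.rpow p).mul (IsHarnack.one_sub.rpow α)).rpow (-1)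

theorem intervalIntegrable_one_div (hω : IsUpperDoublingWeight ω) (p α : ℝ) {s : ℝ}
    (hs : s ∈ Ico (0 : ℝ) 1) :
    IntervalIntegrable (fun t => 1 / (hat ω t ^ p * (1 - t) ^ α)) volume 0 s := by
  refine ContinuousOn.intervalIntegrable ?_
  rw [uIcc_of_le hs.1]
  have hmem : ∀ t ∈ Icc 0 s, t ∈ Ico (0 : ℝ) 1 := fun t ht => ⟨ht.1, ht.2.trans_lt hs.2⟩
  have hhat : ContinuousOn (hat ω) (Icc 0 s) :=
    (continuousOn_hat hω.intervalIntegrable).mono (Icc_subset_Icc_right hs.2.le)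
  have hone_sub : ContinuousOn (fun t : ℝ => 1 - t) (Icc 0 s) := by fun_prop
  refine continuousOn_const.div
    ((hhat.rpow_const fun t ht => Or.inl (hω.hat_pos t (hmem t ht)).ne').mul
      (hone_sub.rpow_const fun t ht => Or.inl (sub_pos.2 (hmem t ht).2).ne')) fun t ht => ?_
  exact (one_div_pos.1 ((hω.isHarnack_one_div p α).pos t (hmem t ht))).ne'

theorem tsum_isTheta_integral_add_one (hω : IsUpperDoublingWeight ω) (p α : ℝ) :
    (fun s => ∑' n : ℕ, ((n : ℝ) + 1) ^ (α - 2) * s ^ n / moment ω (2 * n + 1) ^ p) =Θ[𝓟 (Ico 0 1)]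
      fun s => (∫ t in (0 : ℝ)..s, 1 / (hat ω t ^ p * (1 - t) ^ α)) + 1 := by
  have hmoment : ∀ n : ℕ, 0 ≤ moment ω (2 * n + 1) := fun n => hω.moment_nonneg (by positivity)
  have hcoeff : (fun n : ℕ => ((n : ℝ) + 1) ^ (α - 2) / moment ω (2 * n + 1) ^ p) =Θ[⊤]
      riemannTerm fun t => 1 / (hat ω t ^ p * (1 - t) ^ α) := by
    rw [funext (riemannTerm_one_div ω p α)]
    refine (isTheta_refl _ _).div (hω.moment_isTheta_hat_node.rpow ?_ ?_)
    · exact Eventually.of_forall hmoment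
    · exact Eventually.of_forall fun n => (hω.hat_pos _ (node_mem_Ico n)).le
  simpa only [div_mul_eq_mul_div] using
    (hω.isHarnack_one_div p α).tsum_mul_pow_isTheta_integral_add_one
      (fun s hs => hω.intervalIntegrable_one_div p α hs)
      (fun n => div_nonneg (by positivity) (Real.rpow_nonneg (hmoment n) p)) hcoeff

end IsUpperDoublingWeight

theorem sum_vs_integral_estimate_general {ω : ℝ → ℝ} (hω : IsUpperDoublingWeight ω) (p α : ℝ) :
    ∃ c > 0, ∃ C > 0, ∀ s ∈ Ico (0 : ℝ) 1,
      c * ((∫ t in (0 : ℝ)..s, 1 / (hat ω t ^ p * (1 - t) ^ α)) + 1) ≤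
        (∑' n : ℕ, ((n : ℝ) + 1) ^ (α - 2) * s ^ n / moment ω (2 * n + 1) ^ p) ∧
      (∑' n : ℕ, ((n : ℝ) + 1) ^ (α - 2) * s ^ n / moment ω (2 * n + 1) ^ p) ≤
        C * ((∫ t in (0 : ℝ)..s, 1 / (hat ω t ^ p * (1 - t) ^ α)) + 1) := by
  have hmoment : ∀ n : ℕ, 0 ≤ moment ω (2 * n + 1) := fun n => hω.moment_nonneg (by positivity)
  refine exists_pos_mul_le_and_le_mul_of_isTheta (fun s hs => tsum_nonneg fun n => ?_)
    (fun s hs => add_nonneg ?_ zero_le_one) (hω.tsum_isTheta_integral_add_one p α)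
  · exact div_nonneg (mul_nonneg (by positivity) (pow_nonneg hs.1 n))
      (Real.rpow_nonneg (hmoment n) p)
  · exact (hω.isHarnack_one_div p α).integral_nonneg hs

theorem sum_vs_integral_estimate (ω : ℝ → ℝ) (p α : ℝ) (hp : 0 < p)
    (hω_nonneg : ∀ r ∈ Set.Ico (0:ℝ) 1, 0 ≤ ω r)
    (hω_int : IntervalIntegrable ω volume 0 1)
    (hω_pos : ∀ r ∈ Set.Ico (0:ℝ) 1, 0 < hat ω r)
    (hDhat : ∃ C > 1, ∀ r ∈ Set.Ico (0:ℝ) 1, hat ω r ≤ C * hat ω ((1 + r) / 2)) :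
    ∃ c > 0, ∃ C > 0, ∀ s ∈ Set.Ioo (0:ℝ) 1,
      c * ((∫ t in (0:ℝ)..s, 1 / (hat ω t ^ p * (1 - t) ^ α)) + 1) ≤
        (∑' n : ℕ, ((n : ℝ) + 1) ^ (α - 2) * s ^ n / moment ω (2 * n + 1) ^ p) ∧
      (∑' n : ℕ, ((n : ℝ) + 1) ^ (α - 2) * s ^ n / moment ω (2 * n + 1) ^ p) ≤
        C * ((∫ t in (0:ℝ)..s, 1 / (hat ω t ^ p * (1 - t) ^ α)) + 1) := by
  obtain ⟨c, hc, C, hC, hbounds⟩ := sum_vs_integral_estimate_general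
    ⟨hω_nonneg, hω_int, hω_pos, hDhat.imp fun _ h => h.2⟩ p α
  exact ⟨c, hc, C, hC, fun s hs => hbounds s (Ioo_subset_Ico_self hs)⟩
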